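/- arXiv:1212.4879 — 8 statements merged into one kernel-verified Lean document; each statement's English description precedes it below -/
import Mathlib

section
/- Property (7) holds if and only if property (7') holds: (for all i, j: Σ_k N_{ij}^k = Σ_k N_{ī j}^k) if and only if (for all j, k: Σ_i N_{ij}^k = Σ_i N_{ij}^{k̄}). -/
/-!
Since `S` is symmetric, complex conjugation of `S` amounts to applying the involution to either
index, so `S_{k̄ℓ} = conj S_{kℓ}`. Hence the Verlinde coefficients satisfy the Frobenius reciprocity
`N_{ij}^k = N_{k̄j}^{ī}`. Summing over `k` and reindexing by the involution turns the row sum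
`∑_k N_{ij}^k` into `∑_k N_{kj}^{ī}`, and under this identification the two properties are the same
family of equations, up to replacing an index by its conjugate.
-/

open Matrix BigOperators

/-- The Verlinde coefficient `N_{ij}^k = ∑_ℓ S_{iℓ} S_{jℓ} conj(S_{kℓ}) / S_{1ℓ}`. -/
noncomputable def verlN {ι : Type*} [Fintype ι] (one : ι) (S : Matrix ι ι ℂ) (i j k : ι) : ℂ :=
  ∑ ℓ, S i ℓ * S j ℓ * (starRingEnd ℂ) (S k ℓ) / S one ℓ

/-- Frobenius reciprocity `N_{ij}^k = N_{k̄j}^{ī}`. -/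
theorem verlN_reciprocity {ι : Type*} [Fintype ι] (one : ι) (bar : ι → ι)
    (hbar : ∀ i, bar (bar i) = i) (S : Matrix ι ι ℂ)
    (hsymm : ∀ i j, S i j = S j i)
    (hconj : ∀ i j, (starRingEnd ℂ) (S i j) = S i (bar j)) (i j k : ι) :
    verlN one S i j k = verlN one S (bar k) j (bar i) := by
  unfold verlN
  refine Finset.sum_congr rfl fun ℓ _ => ?_
  have h1 : (starRingEnd ℂ) (S k ℓ) = S (bar k) ℓ := by
    rw [hsymm k ℓ, hconj, hsymm]
  have h2 : (starRingEnd ℂ) (S (bar i) ℓ) = S i ℓ := by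
    rw [hsymm (bar i) ℓ, hconj, hbar, hsymm]
  rw [h1, h2]
  ring

theorem sum_verlN_eq {ι : Type*} [Fintype ι] (one : ι) (bar : ι → ι)
    (hbar : ∀ i, bar (bar i) = i) (S : Matrix ι ι ℂ)
    (hsymm : ∀ i j, S i j = S j i)
    (hconj : ∀ i j, (starRingEnd ℂ) (S i j) = S i (bar j)) (i j : ι) :
    ∑ k, verlN one S i j k = ∑ k, verlN one S k j (bar i) := by
  rw [← (Function.Involutive.bijective hbar).sum_comp fun k => verlN one S k j (bar i)]
  exact Finset.sum_congr rfl fun k _ => verlN_reciprocity one bar hbar S hsymm hconj i j k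

theorem stmt_4 {ι : Type*} [Fintype ι] [DecidableEq ι] (one : ι) (bar : ι → ι)
    (hbar : ∀ i, bar (bar i) = i) (hbar1 : bar one = one)
    (S : Matrix ι ι ℂ) (hS : S ∈ Matrix.unitaryGroup ι ℂ)
    (hsymm : ∀ i j, S i j = S j i)
    (hconj : ∀ i j, (starRingEnd ℂ) (S i j) = S i (bar j))
    (hS1 : ∀ ℓ, S one ℓ ≠ 0) :
    (∀ i j, ∑ k, verlN one S i j k = ∑ k, verlN one S (bar i) j k) ↔
    (∀ j k, ∑ i, verlN one S i j k = ∑ i, verlN one S i j (bar k)) := by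
  simp only [sum_verlN_eq one bar hbar S hsymm hconj, hbar]
  exact ⟨fun h j k => (h k j).symm, fun h i j => (h j i).symm⟩
end

section
/- If Σ_i S_{iℓ} = 0 for every index ℓ with ℓ ≠ ℓ̄, then the sum rule (7) holds: for all i and j, Σ_k N_{ij}^k = Σ_k N_{ī j}^k. -/
/-! Summing the Verlinde formula over `k` turns `∑ k, N_{ij}^k` into
`∑ ℓ, S_{iℓ} S_{jℓ} conj(∑ k, S_{kℓ}) / S_{1ℓ}`. The terms with `ℓ ≠ bar ℓ` vanish by hypothesis.
When `ℓ = bar ℓ`, symmetry and the conjugation rule give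
`S_{bar i, ℓ} = conj S_{iℓ} = S_{i, bar ℓ} = S_{iℓ}`, so the remaining terms do not change when `i`
is replaced by `bar i`. -/

open Matrix BigOperators

theorem stmt_5 {ι : Type*} [Fintype ι] [DecidableEq ι] (one : ι) (bar : ι → ι)
    (hbar : ∀ i, bar (bar i) = i) (hbar1 : bar one = one)
    (S : Matrix ι ι ℂ) (hS : S ∈ Matrix.unitaryGroup ι ℂ)
    (hsymm : ∀ i j, S i j = S j i)
    (hconj : ∀ i j, (starRingEnd ℂ) (S i j) = S i (bar j))
    (hS1 : ∀ ℓ, S one ℓ ≠ 0)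
    (hvanish : ∀ ℓ, ℓ ≠ bar ℓ → ∑ i, S i ℓ = 0) :
    ∀ i j, ∑ k, verlN one S i j k = ∑ k, verlN one S (bar i) j k := by
  intro i j
  have key : ∀ a, ∑ k, verlN one S a j k
      = ∑ ℓ, S a ℓ * S j ℓ * (starRingEnd ℂ) (∑ k, S k ℓ) / S one ℓ := by
    intro a
    simp only [verlN]
    rw [Finset.sum_comm]
    refine Finset.sum_congr rfl fun ℓ _ => ?_
    rw [map_sum, Finset.mul_sum, Finset.sum_div]
  rw [key, key]
  refine Finset.sum_congr rfl fun ℓ _ => ?_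
  by_cases h : ℓ = bar ℓ
  · have h1 : S (bar i) ℓ = S i ℓ := by
      rw [hsymm, ← hconj, hsymm, hconj, ← h]
    rw [h1]
  · rw [hvanish ℓ h]
    simp
end

section
/- If the sum rule (7') holds, i.e. for all j and k one has Σ_i N_{ij}^k = Σ_i N_{ij}^{k̄}, then Σ_i S_{iℓ} = 0 for every index ℓ with ℓ ≠ ℓ̄. -/
/-!
Write `σ_ℓ = ∑ i, S i ℓ`. Then `∑ i, N_{ij}^k = ∑ ℓ, S j ℓ * (σ_ℓ / S one ℓ) * conj (S k ℓ)`, so pairing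
with the `m`-th column of `S` and using that the columns are orthonormal isolates the term `ℓ = m`.
The sum rule therefore gives `σ_m * conj (S k m) = σ_m * conj (S (bar k) m)` for all `k`.
If `σ_m ≠ 0`, then `S k m = S (bar k) m`, which by symmetry is `conj (S k m) = S k (bar m)`; thus
columns `m` and `bar m` of `S` coincide, and by orthonormality `m = bar m`.
-/

open Matrix BigOperators

theorem columns_orthonormal {ι : Type*} [Fintype ι] [DecidableEq ι] {S : Matrix ι ι ℂ}
    (hS : S ∈ Matrix.unitaryGroup ι ℂ) (m ℓ : ι) :
    ∑ j, (starRingEnd ℂ) (S j m) * S j ℓ = if m = ℓ then 1 else 0 := by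
  have h := congrFun (congrFun (Matrix.mem_unitaryGroup_iff'.mp hS) m) ℓ
  simpa [Matrix.mul_apply, Matrix.star_apply, Matrix.one_apply] using h

/-- Orthonormality of the columns of `S` extracts a single term of the Verlinde sum. -/
theorem sum_conj_mul_verlN {ι : Type*} [Fintype ι] [DecidableEq ι] (one : ι) {S : Matrix ι ι ℂ}
    (hS : S ∈ Matrix.unitaryGroup ι ℂ) (m k : ι) :
    ∑ j, (starRingEnd ℂ) (S j m) * ∑ i, verlN one S i j k
      = (∑ i, S i m) / S one m * (starRingEnd ℂ) (S k m) := by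
  have h1 : ∀ j, ∑ i, verlN one S i j k
      = ∑ ℓ, S j ℓ * ((∑ i, S i ℓ) / S one ℓ * (starRingEnd ℂ) (S k ℓ)) := by
    intro j
    unfold verlN
    rw [Finset.sum_comm]
    refine Finset.sum_congr rfl fun ℓ _ => ?_
    rw [Finset.sum_div, Finset.sum_mul, Finset.mul_sum]
    refine Finset.sum_congr rfl fun i _ => ?_
    ring
  simp_rw [h1, Finset.mul_sum, ← mul_assoc]
  rw [Finset.sum_comm]
  simp_rw [mul_assoc, ← mul_assoc ((starRingEnd ℂ) (S _ m)), ← Finset.sum_mul,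
    columns_orthonormal hS]
  simp

theorem stmt_6 {ι : Type*} [Fintype ι] [DecidableEq ι] (one : ι) (bar : ι → ι)
    (hbar : ∀ i, bar (bar i) = i) (hbar1 : bar one = one)
    (S : Matrix ι ι ℂ) (hS : S ∈ Matrix.unitaryGroup ι ℂ)
    (hsymm : ∀ i j, S i j = S j i)
    (hconj : ∀ i j, (starRingEnd ℂ) (S i j) = S i (bar j))
    (hS1 : ∀ ℓ, S one ℓ ≠ 0)
    (hsum : ∀ j k, ∑ i, verlN one S i j k = ∑ i, verlN one S i j (bar k)) :
    ∀ ℓ, ℓ ≠ bar ℓ → ∑ i, S i ℓ = 0 := by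
  intro m hm
  by_contra hσ
  have hc : (∑ i, S i m) / S one m ≠ 0 := div_ne_zero hσ (hS1 m)
  have hcol : ∀ k, S k m = S k (bar m) := by
    intro k
    have h := sum_conj_mul_verlN one hS m k
    simp_rw [hsum _ k] at h
    rw [sum_conj_mul_verlN one hS m (bar k)] at h
    have h2 : S (bar k) m = S k m := (starRingEnd ℂ).injective (mul_left_cancel₀ hc h)
    calc S k m = S m (bar k) := by rw [← h2, hsymm]
      _ = S k (bar m) := by rw [← hconj, ← hconj, hsymm]
  have h1 := columns_orthonormal hS m m
  have h2 := columns_orthonormal hS m (bar m)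
  simp_rw [← hcol] at h2
  rw [h1, if_pos rfl, if_neg hm] at h2
  exact one_ne_zero h2
end

section
/- (Proposition 1) The sum rule (7) holds for all pairs of indices if and only if Σ_i S_{ij} vanishes for every non-self-conjugate index: (for all i, j: Σ_k N_{ij}^k = Σ_k N_{ī j}^k) if and only if (for every j with j ≠ j̄: Σ_i S_{ij} = 0). -/
/-!
Summing the Verlinde formula over `k` gives `∑ k, N_{ij}^k = ∑ ℓ, S_{jℓ} (S_{iℓ} c_ℓ)` with
`c_ℓ = conj (∑ k, S_{kℓ}) / S_{1ℓ}`. By symmetry, passing from `i` to `ī` replaces `S_{iℓ}` by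
`S_{i ℓ̄}`. As `S` is invertible, the sum rule for all `j` therefore says
`(S_{iℓ} - S_{i ℓ̄}) c_ℓ = 0` for all `i` and `ℓ`. Distinct columns of an invertible matrix differ,
so this means that `c_ℓ = 0`, i.e. `∑ k, S_{kℓ} = 0`, whenever `ℓ ≠ ℓ̄`.
-/

open Matrix BigOperators

lemma sum_verlN {ι : Type*} [Fintype ι] (one : ι) (S : Matrix ι ι ℂ) (i j : ι) :
    ∑ k, verlN one S i j k =
      (S *ᵥ fun ℓ => S i ℓ * ((starRingEnd ℂ) (∑ k, S k ℓ) / S one ℓ)) j := by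
  simp only [verlN, mulVec, dotProduct]
  rw [Finset.sum_comm]
  refine Finset.sum_congr rfl fun ℓ _ => ?_
  rw [map_sum, Finset.sum_div, Finset.mul_sum, Finset.mul_sum]
  refine Finset.sum_congr rfl fun k _ => ?_
  ring

theorem stmt_7 {ι : Type*} [Fintype ι] [DecidableEq ι] (one : ι) (bar : ι → ι)
    (hbar : ∀ i, bar (bar i) = i) (hbar1 : bar one = one)
    (S : Matrix ι ι ℂ) (hS : S ∈ Matrix.unitaryGroup ι ℂ)
    (hsymm : ∀ i j, S i j = S j i)
    (hconj : ∀ i j, (starRingEnd ℂ) (S i j) = S i (bar j))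
    (hS1 : ∀ ℓ, S one ℓ ≠ 0) :
    (∀ i j, ∑ k, verlN one S i j k = ∑ k, verlN one S (bar i) j k) ↔
    (∀ j, j ≠ bar j → ∑ i, S i j = 0) := by
  have hinj : Function.Injective S.mulVec := by
    intro v w h
    have h' := congrArg (fun u => (star S) *ᵥ u) h
    simpa [Matrix.mulVec_mulVec, Matrix.mem_unitaryGroup_iff'.mp hS] using h'
  have hrow : ∀ i ℓ, S (bar i) ℓ = S i (bar ℓ) := fun i ℓ => by
    rw [hsymm, ← hconj, ← hconj, hsymm]
  simp only [sum_verlN]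
  constructor
  · intro h j hj
    by_contra hne
    have hcol : ∀ i, S i j = S i (bar j) := fun i => by
      have h1 := congrFun (hinj (funext (h i))) j
      have hc : (starRingEnd ℂ) (∑ k, S k j) / S one j ≠ 0 :=
        div_ne_zero ((map_ne_zero _).mpr hne) (hS1 j)
      rw [← hrow]
      exact mul_right_cancel₀ hc h1
    have h2 : (Pi.single j 1 : ι → ℂ) = Pi.single (bar j) 1 := by
      apply hinj
      funext i
      simpa using hcol i
    have h3 := congrFun h2 j
    simp [Pi.single_apply, hj] at h3
  · intro h i j
    congr 2
    funext ℓ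
    by_cases hℓ : ℓ = bar ℓ
    · rw [hrow, ← hℓ]
    · simp [h ℓ hℓ]
end

section
/- (Proposition 3) If u is a unit and j is an index such that φ_u(j) = S_{uj}/S_{1j} ≠ 1, then Σ_i S_{ij} = 0. -/
/-!
Column `j` of `S` is an eigenvector of the fusion matrix `N_u` with eigenvalue
`φ_u(j) = S_{uj} / S_{1j}`, because the columns of the unitary matrix `S` are orthonormal.
As `N_u` is the permutation matrix of `J_u`, this reads `S_{J_u(i) j} = φ_u(j) S_{ij}`. Summing over
`i`, the permutation leaves the column sum unchanged, so the sum equals `φ_u(j)` times itself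
and vanishes when `φ_u(j) ≠ 1`.
-/

open Matrix BigOperators

/-- Each column of `S` is an eigenvector of every fusion matrix. -/
theorem sum_verlN_mul {ι : Type*} [Fintype ι] [DecidableEq ι] (one : ι)
    (S : Matrix ι ι ℂ) (hS : S ∈ Matrix.unitaryGroup ι ℂ) (u i j : ι) :
    ∑ k, verlN one S u i k * S k j = S u j / S one j * S i j := by
  have horth (ℓ : ι) : ∑ k, (starRingEnd ℂ) (S k ℓ) * S k j = if ℓ = j then 1 else 0 := by
    have h := congrFun (congrFun (Matrix.mem_unitaryGroup_iff'.mp hS) ℓ) j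
    simpa [Matrix.mul_apply, Matrix.one_apply, Matrix.star_apply] using h
  calc ∑ k, verlN one S u i k * S k j
      = ∑ ℓ, S u ℓ * S i ℓ / S one ℓ * ∑ k, (starRingEnd ℂ) (S k ℓ) * S k j := by
        simp only [verlN, Finset.sum_mul, Finset.mul_sum]
        rw [Finset.sum_comm]
        refine Finset.sum_congr rfl fun ℓ _ => Finset.sum_congr rfl fun k _ => ?_
        ring
    _ = S u j / S one j * S i j := by
        simp only [horth, mul_ite, mul_one, mul_zero, Finset.sum_ite_eq', Finset.mem_univ, if_true]
        ring

theorem stmt_8 {ι : Type*} [Fintype ι] [DecidableEq ι] (one : ι)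
    (S : Matrix ι ι ℂ) (hS : S ∈ Matrix.unitaryGroup ι ℂ)
    (hS1 : ∀ ℓ, S one ℓ ≠ 0)
    (u : ι) (Ju : Equiv.Perm ι)
    (hunit : ∀ j k, verlN one S u j k = if k = Ju j then 1 else 0)
    (j : ι) (hphi : S u j / S one j ≠ 1) :
    ∑ i, S i j = 0 := by
  have hJ (i : ι) : S (Ju i) j = S u j / S one j * S i j := by
    simpa [hunit] using sum_verlN_mul one S hS u i j
  have hsum : ∑ i, S i j = S u j / S one j * ∑ i, S i j := by
    rw [Finset.mul_sum, ← Equiv.sum_comp Ju fun i => S i j]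
    exact Finset.sum_congr rfl fun i _ => hJ i
  by_contra h
  exact hphi (mul_right_cancel₀ h (by rw [one_mul]; exact hsum.symm))
end

section
/- If u is a unit and the quantum dimension φ_u(1) = S_{u1}/S_{11} is a positive real number, then φ_u(1) = 1. -/
/-! The matrix form of the Verlinde formula is `N_u S = S D` with `D` the diagonal matrix of the
values `φ_u(ℓ)`: column `m` of `S` is an eigenvector of `N_u` with eigenvalue `φ_u(m)`. When `N_u`
is a permutation matrix it preserves the norm of that unit column, so `|φ_u(m)| = 1`; the only
positive real number of modulus `1` is `1`. -/

open Matrix BigOperators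

theorem unitary_col {ι : Type*} [Fintype ι] [DecidableEq ι]
    (S : Matrix ι ι ℂ) (hS : S ∈ Matrix.unitaryGroup ι ℂ) (l m : ι) :
    ∑ k, (starRingEnd ℂ) (S k l) * S k m = if l = m then 1 else 0 := by
  have h := congrFun (congrFun (Matrix.mem_unitaryGroup_iff'.mp hS) l) m
  simpa [Matrix.mul_apply, Matrix.star_apply, Matrix.one_apply] using h

/-- Column `m` of `S` is an eigenvector of the fusion matrix `N_u` with eigenvalue `φ_u(m)`. -/
theorem verlN_col {ι : Type*} [Fintype ι] [DecidableEq ι] (one : ι)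
    (S : Matrix ι ι ℂ) (hS : S ∈ Matrix.unitaryGroup ι ℂ) (u j m : ι) :
    ∑ k, verlN one S u j k * S k m = S u m / S one m * S j m := by
  calc ∑ k, verlN one S u j k * S k m
      = ∑ l, S u l * S j l / S one l * ∑ k, (starRingEnd ℂ) (S k l) * S k m := by
        simp only [verlN, Finset.sum_mul, Finset.mul_sum]
        rw [Finset.sum_comm]
        refine Finset.sum_congr rfl fun l _ => Finset.sum_congr rfl fun k _ => ?_
        ring
    _ = S u m / S one m * S j m := by
        simp only [unitary_col S hS, mul_ite, mul_one, mul_zero, Finset.sum_ite_eq',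
          Finset.mem_univ, if_true]
        ring

theorem stmt_10 {ι : Type*} [Fintype ι] [DecidableEq ι] (one : ι)
    (S : Matrix ι ι ℂ) (hS : S ∈ Matrix.unitaryGroup ι ℂ)
    (hS1 : ∀ ℓ, S one ℓ ≠ 0)
    (u : ι) (Ju : Equiv.Perm ι)
    (hunit : ∀ j k, verlN one S u j k = if k = Ju j then 1 else 0)
    (hpos : ∃ r : ℝ, 0 < r ∧ S u one / S one one = (r : ℂ)) :
    S u one / S one one = 1 := by
  obtain ⟨r, hr, hφ⟩ := hpos
  have heig : ∀ j, S (Ju j) one = (r : ℂ) * S j one := fun j => by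
    have h := verlN_col one S hS u j one
    simpa [hunit, hφ] using h
  have hcol := unitary_col S hS one one
  rw [if_pos rfl] at hcol
  -- Reindexing the norm of the column by `Ju` multiplies it by the squared eigenvalue.
  have hsq : (r : ℂ) ^ 2 = 1 := by
    have h := (Equiv.sum_comp Ju fun k => (starRingEnd ℂ) (S k one) * S k one).trans hcol
    have h' : ∑ j, (starRingEnd ℂ) (S (Ju j) one) * S (Ju j) one
        = (r : ℂ) ^ 2 * ∑ j, (starRingEnd ℂ) (S j one) * S j one := by
      rw [Finset.mul_sum]
      refine Finset.sum_congr rfl fun j _ => ?_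
      rw [heig, map_mul, Complex.conj_ofReal]
      ring
    rwa [h', hcol, mul_one] at h
  have hr2 : r ^ 2 = 1 := by exact_mod_cast hsq
  have hr1 : r = 1 := by nlinarith
  rw [hφ, hr1, Complex.ofReal_one]
end

section
/- Let ι be a finite type and let N be an ι × ι matrix with non-negative integer entries such that N · Nᵀ equals the identity matrix. Then N is a permutation matrix: there exists a permutation σ of ι such that N_{ij} = 1 if j = σ(i) and N_{ij} = 0 otherwise. -/
/-!
The diagonal of `N * Nᵀ = 1` says that the squares of the entries in each row sum to `1`; for natural
numbers this forces exactly one entry of the row to be `1` and the others to be `0`. The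
off-diagonal part says that distinct rows have disjoint supports, so sending a row to the position of
its `1` is injective, hence a permutation since `ι` is finite.
-/

theorem stmt_11 {ι : Type*} [Fintype ι] [DecidableEq ι] (N : Matrix ι ι ℕ)
    (h : N * N.transpose = 1) :
    ∃ σ : Equiv.Perm ι, ∀ i j, N i j = if j = σ i then 1 else 0 := by
  have hsum : ∀ i k, ∑ j, N i j * N k j = if i = k then 1 else 0 := fun i k => by
    simpa [Matrix.mul_apply, Matrix.one_apply] using congrFun (congrFun h i) k
  have hrow : ∀ i, ∃ j, ∀ k, N i k = if k = j then 1 else 0 := by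
    intro i
    have hi : ∑ j, N i j * N i j = 1 := by simpa using hsum i i
    obtain ⟨j, -, hj⟩ := Finset.exists_ne_zero_of_sum_ne_zero (hi.trans_ne one_ne_zero)
    rw [← Finset.add_sum_erase _ _ (Finset.mem_univ j)] at hi
    have hrest : ∑ k ∈ Finset.univ.erase j, N i k * N i k = 0 := by omega
    refine ⟨j, fun k => ?_⟩
    split_ifs with hk
    · subst hk
      exact Nat.eq_one_of_mul_eq_one_left (by omega : N i k * N i k = 1)
    · simpa using Finset.sum_eq_zero_iff.mp hrest k (by simp [hk])
  choose f hf using hrow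
  have hinj : Function.Injective f := by
    intro i k hik
    by_contra hne
    have h0 : ∑ j, N i j * N k j = 0 := by simpa [hne] using hsum i k
    have h1 := Finset.sum_eq_zero_iff.mp h0 (f i) (Finset.mem_univ _)
    simp [hf, hik] at h1
  exact ⟨Equiv.ofBijective f (Finite.injective_iff_bijective.mp hinj), hf⟩
end

section
/- The sum rule (7) fails for the Frobenius group F_21: for every nonabelian group G of order 21 (i.e. G ≅ ℤ_7 ⋊ ℤ_3), there exist irreducible finite-dimensional complex representations i and j of G such that Σ_k N_{ij}^k ≠ Σ_k N_{ī j}^k, where the sums run over the isomorphism classes of irreducible complex representations k of G. -/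
/-!
A nonabelian group `G` of order 21 is generated by `a` of order 7 and `b` of order 3 with
`b a b⁻¹ = a²`, and `(x, y) ↦ a ^ x * b ^ y` identifies `ZMod 7 × ZMod 3` with `G`
(`exists_coords`). A nontrivial additive character `ψ` of `ZMod 7` induces a three-dimensional
irreducible representation whose character `χ` vanishes off `⟨a⟩` and takes the value
`z + z² + z⁴` at `a ^ x`, where `z = ψ x` (`mat3_trace`); the inverse character `ψ⁻¹` gives the
complex conjugate `χ̄`. The characters of `ZMod 3` give three one-dimensional representations
`L t`. Since `z⁷ = 1`,

* `χ * χ = χ + 2 χ̄`,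
* `χ̄ * χ = χ + χ̄ + ∑ t, L t`.

The sum over `k` of the multiplicities of `W k` is additive in the character and equals `1` on each
irreducible representation (`sum_mult_simple`), so for `i = j` the index of `χ` the two sums
are `3` and `5`.

In the definition of `multIn` the second character is conjugated, whereas the library's
orthogonality relations evaluate it at `g⁻¹`; `char_conj_eq_inv` identifies the two, and
`char_rightDual` computes the character of the categorical dual.
-/


open CategoryTheory MonoidalCategory

/-- The multiplicity of the irreducible complex representation `W` of the finite group `G`
in the representation `X`, computed as the character inner product
`⟨χ_X, χ_W⟩ = (1/|G|) Σ_g χ_X(g) conj(χ_W(g))`. -/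
noncomputable def multIn {G : Type} [Group G] [Fintype G] (X W : FDRep ℂ G) : ℂ :=
  (1 / (Fintype.card G : ℂ)) * ∑ g : G, X.character g * (starRingEnd ℂ) (W.character g)

/-! ### Characters of duals and complex conjugates -/

/-- The categorical transpose `fᘁ` of a map of finite-dimensional spaces is the usual transpose:
both are characterised by `(fᘁ φ) x = φ (f x)`, the compatibility with evaluation. -/
lemma fg_mate_hom {X Y : FGModuleCat ℂ} (f : X ⟶ Y) :
    (fᘁ : Yᘁ ⟶ Xᘁ).hom.hom = Module.Dual.transpose (R := ℂ) f.hom.hom := by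
  have h := rightAdjointMate_comp_evaluation f
  apply LinearMap.ext
  intro φ
  apply LinearMap.ext
  intro x
  have h2 := congrArg (fun k => k.hom.hom (TensorProduct.tmul ℂ φ x)) h
  exact h2

lemma char_rightDual {G : Type} [Group G] (V : FDRep ℂ G) (g : G) :
    (Vᘁ).character g = V.character g⁻¹ := by
  have h : (Vᘁ).ρ g = Module.Dual.transpose (R := ℂ) (V.ρ g⁻¹) := by
    have := Action.rightDual_ρ V g
    have h2 := congrArg (fun k => k.hom.hom) this
    exact h2.trans (fg_mate_hom _)
  unfold FDRep.character
  rw [h]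
  exact LinearMap.trace_transpose' _

open Matrix ComplexOrder in
/-- Weyl's averaging argument: `P = ∑ h, (M h)ᴴ * M h` is positive definite and `G`-invariant, so
`(M g)ᴴ = P * M g⁻¹ * P⁻¹`, and the two sides have the same trace. -/
lemma trace_star {G n : Type*} [Group G] [Fintype G] [Fintype n] [DecidableEq n]
    (M : G →* Matrix n n ℂ) (g : G) : star (M g).trace = (M g⁻¹).trace := by
  set P : Matrix n n ℂ := ∑ h : G, (M h)ᴴ * M h with hP
  have hpos : P.PosDef := by
    classical
    rw [hP, ← Finset.add_sum_erase _ _ (Finset.mem_univ (1 : G))]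
    refine PosDef.add_posSemidef ?_ ?_
    · simpa using PosDef.one
    · exact posSemidef_sum _ fun h _ => posSemidef_conjTranspose_mul_self _
  have hu : IsUnit P.det := (Matrix.isUnit_iff_isUnit_det _).1 hpos.isUnit
  have hinv : (M g)ᴴ * P * M g = P := by
    rw [hP, Finset.mul_sum, Finset.sum_mul]
    refine Eq.trans ?_ (Equiv.sum_comp (Equiv.mulRight g) fun h => (M h)ᴴ * M h)
    refine Finset.sum_congr rfl fun h _ => ?_
    simp [Matrix.mul_assoc]
  have h1 : (M g)ᴴ = P * M g⁻¹ * P⁻¹ := by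
    have hg : M g * M g⁻¹ = 1 := by rw [← map_mul]; simp
    calc (M g)ᴴ = (M g)ᴴ * (P * (M g * M g⁻¹) * P⁻¹) := by
          rw [hg, Matrix.mul_one, Matrix.mul_nonsing_inv _ hu, Matrix.mul_one]
      _ = ((M g)ᴴ * P * M g) * M g⁻¹ * P⁻¹ := by simp only [Matrix.mul_assoc]
      _ = _ := by rw [hinv]
  rw [← trace_conjTranspose, h1, Matrix.trace_mul_comm, ← Matrix.mul_assoc,
    Matrix.nonsing_inv_mul _ hu, Matrix.one_mul]

lemma char_conj_eq_inv {G : Type} [Group G] [Fintype G] (V : FDRep ℂ G) (g : G) :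
    (starRingEnd ℂ) (V.character g) = V.character g⁻¹ := by
  classical
  let b := Module.finBasis ℂ V
  let M : G →* Matrix _ _ ℂ := (LinearMap.toMatrixAlgEquiv b).toAlgHom.toRingHom.toMonoidHom.comp V.ρ
  have h (g : G) : V.character g = (M g).trace := by
    exact LinearMap.trace_eq_matrix_trace ℂ b _
  rw [h, h]
  exact trace_star M g

/-! ### Structure of nonabelian groups of order 21 -/

/-- Conjugation by an element `b` of order 3 acts on the normal subgroup `⟨a⟩` of order 7 as
`a ↦ a ^ r` with `r ^ 3 = 1` modulo 7. The case `r = 1` would make `G` abelian, and `r = 4` becomes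
`r = 2` on replacing `b` by `b ^ 2`. -/
lemma exists_gens {G : Type} [Group G] [Fintype G]
    (hcard : Fintype.card G = 21) (hnonab : ¬ ∀ a b : G, a * b = b * a) :
    ∃ a b : G, orderOf a = 7 ∧ orderOf b = 3 ∧ b * a = a ^ 2 * b ∧
      Subgroup.IsComplement' (Subgroup.zpowers a) (Subgroup.zpowers b) := by
  have : Fact (Nat.Prime 7) := ⟨by norm_num⟩
  have : Fact (Nat.Prime 3) := ⟨by norm_num⟩
  have hc : Nat.card G = 21 := by rw [Nat.card_eq_fintype_card, hcard]
  obtain ⟨a, ha⟩ := exists_prime_orderOf_dvd_card (G := G) 7 (by rw [hcard]; norm_num)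
  obtain ⟨b, hb⟩ := exists_prime_orderOf_dvd_card (G := G) 3 (by rw [hcard]; norm_num)
  have compl (c : G) (h : orderOf c = 3) :
      Subgroup.IsComplement' (Subgroup.zpowers a) (Subgroup.zpowers c) :=
    Subgroup.isComplement'_of_coprime
      (by rw [Nat.card_zpowers, Nat.card_zpowers, ha, h, hc])
      (by rw [Nat.card_zpowers, Nat.card_zpowers, ha, h]; norm_num)
  have hnorm : (Subgroup.zpowers a).Normal := by
    apply Subgroup.normal_of_index_eq_minFac_card
    have := (Subgroup.zpowers a).card_mul_index
    rw [Nat.card_zpowers, ha, hc] at this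
    rw [hc]
    norm_num
    omega
  have hmem : b * a * b⁻¹ ∈ Subgroup.zpowers a :=
    hnorm.conj_mem a (Subgroup.mem_zpowers a) b
  obtain ⟨r, hr, hra⟩ : ∃ r < 7, b * a * b⁻¹ = a ^ r := by
    classical
    rw [mem_zpowers_iff_mem_range_orderOf, ha] at hmem
    simp at hmem
    obtain ⟨r, h1, h2⟩ := hmem
    exact ⟨r, h1, h2.symm⟩
  have step (n : ℕ) : b * a ^ n * b⁻¹ = a ^ (r * n) := by
    rw [pow_mul, ← hra, conj_pow]
  have h2 : b ^ 2 * a * (b ^ 2)⁻¹ = a ^ (r * r) := by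
    rw [← step, ← hra]; simp only [pow_two, mul_inv_rev, mul_assoc]
  have h3 : a ^ (r * (r * r)) = a ^ 1 := by
    rw [← step, ← h2]
    have : b ^ 3 = 1 := by rw [← hb, pow_orderOf_eq_one]
    calc b * (b ^ 2 * a * (b ^ 2)⁻¹) * b⁻¹ = b ^ 3 * a * (b ^ 3)⁻¹ := by group
      _ = a ^ 1 := by rw [this]; simp
  rw [pow_inj_mod, ha] at h3
  interval_cases r <;> simp at h3
  · exfalso
    apply hnonab
    have hcomm : Commute b a := by
      rw [pow_one] at hra
      exact mul_inv_eq_iff_eq_mul.1 hra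
    intro x y
    obtain ⟨⟨⟨_, i, rfl⟩, ⟨_, j, rfl⟩⟩, rfl⟩ := (compl b hb).2 x
    obtain ⟨⟨⟨_, k, rfl⟩, ⟨_, l, rfl⟩⟩, rfl⟩ := (compl b hb).2 y
    have e1 : Commute (a ^ i) (a ^ k) := (Commute.refl a).zpow_zpow i k
    have e2 : Commute (b ^ j) (b ^ l) := (Commute.refl b).zpow_zpow j l
    have e3 : Commute (a ^ i) (b ^ l) := hcomm.symm.zpow_zpow i l
    have e4 : Commute (b ^ j) (a ^ k) := hcomm.zpow_zpow j k
    exact (e1.mul_right e3).mul_left (e4.mul_right e2)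
  · exact ⟨a, b, ha, hb, mul_inv_eq_iff_eq_mul.1 hra, compl b hb⟩
  · have hb2 : orderOf (b ^ 2) = 3 := by
      rw [Nat.Coprime.orderOf_pow (by rw [hb]; norm_num), hb]
    refine ⟨a, b ^ 2, ha, hb2, mul_inv_eq_iff_eq_mul.1 ?_, compl _ hb2⟩
    rw [h2, pow_inj_mod, ha]

/-- `2 ^ y` modulo 7, for an exponent `y` modulo 3; well defined because `2 ^ 3 = 1` modulo 7
(see `twoPow_add`). -/
def twoPow (y : ZMod 3) : ZMod 7 := 2 ^ y.val

/-- The coordinates `(x, y) ↦ a ^ x * b ^ y`, with the multiplication of `ZMod 7 ⋊ ZMod 3`. -/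
lemma exists_coords {G : Type} [Group G] [Fintype G]
    (hcard : Fintype.card G = 21) (hnonab : ¬ ∀ a b : G, a * b = b * a) :
    ∃ E : ZMod 7 × ZMod 3 ≃ G, ∀ p q,
      E p * E q = E (p.1 + twoPow p.2 * q.1, p.2 + q.2) := by
  obtain ⟨a, b, ha, hb, hab, hcompl⟩ := exists_gens hcard hnonab
  have pa {m n : ℕ} (h : (m : ZMod 7) = n) : a ^ m = a ^ n := by
    rw [pow_inj_mod, ha]; exact (ZMod.natCast_eq_natCast_iff' _ _ _).1 h
  have pb {m n : ℕ} (h : (m : ZMod 3) = n) : b ^ m = b ^ n := by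
    rw [pow_inj_mod, hb]; exact (ZMod.natCast_eq_natCast_iff' _ _ _).1 h
  have s1 (n : ℕ) : b * a ^ n = a ^ (2 * n) * b := by
    rw [pow_mul]
    exact SemiconjBy.pow_right (show SemiconjBy b a (a ^ 2) from hab) n
  have s2 (m n : ℕ) : b ^ m * a ^ n = a ^ (2 ^ m * n) * b ^ m := by
    induction m generalizing n with
    | zero => simp
    | succ m ih => rw [pow_succ, mul_assoc, s1, ← mul_assoc, ih, mul_assoc, pow_succ, mul_assoc]
  let f : ZMod 7 × ZMod 3 → G := fun p => a ^ p.1.val * b ^ p.2.val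
  have hsurj : Function.Surjective f := by
    intro x
    obtain ⟨⟨⟨_, u, rfl⟩, ⟨_, v, rfl⟩⟩, rfl⟩ := hcompl.2 x
    refine ⟨(u, v), ?_⟩
    simp only [f]
    congr 1
    · rw [← zpow_natCast, zpow_eq_zpow_iff_modEq, ha]
      exact (ZMod.intCast_eq_intCast_iff _ _ 7).1 (by simp)
    · rw [← zpow_natCast, zpow_eq_zpow_iff_modEq, hb]
      exact (ZMod.intCast_eq_intCast_iff _ _ 3).1 (by simp)
  have hbij : Function.Bijective f :=
    (Fintype.bijective_iff_surjective_and_card f).2 ⟨hsurj, by rw [hcard]; rfl⟩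
  refine ⟨Equiv.ofBijective f hbij, fun p q => ?_⟩
  simp only [Equiv.ofBijective_apply, f]
  calc a ^ p.1.val * b ^ p.2.val * (a ^ q.1.val * b ^ q.2.val)
      = a ^ p.1.val * (b ^ p.2.val * a ^ q.1.val) * b ^ q.2.val := by simp only [mul_assoc]
    _ = a ^ (p.1.val + 2 ^ p.2.val * q.1.val) * b ^ (p.2.val + q.2.val) := by
        rw [s2, pow_add, pow_add]; simp only [mul_assoc]
    _ = _ := by
        congr 1
        · apply pa; simp [twoPow]
        · apply pb; simp

/-! ### Matrix representations and their traces -/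

/-- The matrix of `a ^ x * b ^ y`, with `p = (x, y)`, in the representation induced from the
character `ψ` of `⟨a⟩`: `b` permutes the three coordinates cyclically and `a` acts diagonally by
`ψ 1`, `ψ 2`, `ψ 4`. -/
def mat3 (ψ : AddChar (ZMod 7) ℂ) (p : ZMod 7 × ZMod 3) : Matrix (ZMod 3) (ZMod 3) ℂ :=
  Matrix.of fun i j => if j = i + p.2 then ψ (p.1 * twoPow i) else 0

/-- The one-dimensional representation inflated from a character `ω` of the quotient `ZMod 3`, as
`1 × 1` matrices. -/
def mat1 (ω : AddChar (ZMod 3) ℂ) (p : ZMod 7 × ZMod 3) : Matrix Unit Unit ℂ :=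
  Matrix.of fun _ _ => ω p.2

/-- The multiplication of `G` in the coordinates of `exists_coords`. -/
def cmul (p q : ZMod 7 × ZMod 3) : ZMod 7 × ZMod 3 := (p.1 + twoPow p.2 * q.1, p.2 + q.2)

lemma twoPow_add : ∀ i j, twoPow (i + j) = twoPow i * twoPow j := by decide

lemma mat3_mul (ψ : AddChar (ZMod 7) ℂ) (p q) : mat3 ψ (cmul p q) = mat3 ψ p * mat3 ψ q := by
  ext i j
  rw [Matrix.mul_apply, Finset.sum_eq_single (i + p.2)
    (by intro k _ hk; simp [mat3, hk]) (by simp)]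
  simp only [mat3, cmul, Matrix.of_apply, if_true, mul_ite, mul_zero, ← AddChar.map_add_eq_mul,
    twoPow_add, ← add_assoc]
  congr 2
  ring

lemma mat3_zero (ψ : AddChar (ZMod 7) ℂ) : mat3 ψ 0 = 1 := by
  ext i j
  simp [mat3, Matrix.one_apply, eq_comm]

lemma mat1_mul (ω : AddChar (ZMod 3) ℂ) (p q) : mat1 ω (cmul p q) = mat1 ω p * mat1 ω q := by
  ext i j
  simp [mat1, cmul, Matrix.mul_apply, AddChar.map_add_eq_mul]

lemma mat1_zero (ω : AddChar (ZMod 3) ℂ) : mat1 ω 0 = 1 := by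
  ext i j
  simp [mat1]

lemma mat1_trace (ω : AddChar (ZMod 3) ℂ) (p) : (mat1 ω p).trace = ω p.2 := by
  simp [mat1, Matrix.trace]

lemma mat3_trace (ψ : AddChar (ZMod 7) ℂ) (p) : (mat3 ψ p).trace =
    if p.2 = 0 then ψ p.1 + ψ p.1 ^ 2 + ψ p.1 ^ 4 else 0 := by
  have h : ∀ i : ZMod 3, twoPow i = ((2 ^ i.val : ℕ) : ZMod 7) := by decide
  simp only [Matrix.trace, Matrix.diag, mat3, Matrix.of_apply, left_eq_add]
  split_ifs
  · have e (i : ZMod 3) : ψ (p.1 * twoPow i) = ψ p.1 ^ (2 ^ i.val) := by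
      rw [h, mul_comm, ← nsmul_eq_mul, AddChar.map_nsmul_eq_pow]
    simp only [e]
    exact (Fin.sum_univ_three (fun i : Fin 3 => ψ p.1 ^ (2 ^ i.val))).trans (by norm_num)
  · simp

lemma seven (ψ : AddChar (ZMod 7) ℂ) (x : ZMod 7) : ψ x ^ 7 = 1 := by
  rw [← AddChar.map_nsmul_eq_pow, nsmul_eq_mul, show ((7 : ℕ) : ZMod 7) = 0 from rfl]; simp

lemma conj7 (ψ : AddChar (ZMod 7) ℂ) (x : ZMod 7) : (starRingEnd ℂ) (ψ x) = ψ x ^ 6 := by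
  have h := seven ψ x
  have h0 : ψ x ≠ 0 := by intro h0; rw [h0] at h; norm_num at h
  rw [← AddChar.map_neg_eq_conj, AddChar.map_neg_eq_inv]
  field_simp
  linear_combination - h

lemma sum_pow (ψ : AddChar (ZMod 7) ℂ) (hψ : ψ ≠ 1) (n : ℕ) (hn : n.Coprime 7) :
    ∑ x, ψ x ^ n = 0 := by
  have : ∀ x, ψ x ^ n = ψ (x * (ZMod.unitOfCoprime n hn)) := by
    intro x
    rw [ZMod.coe_unitOfCoprime, mul_comm, ← nsmul_eq_mul, AddChar.map_nsmul_eq_pow]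
  simp only [this]
  rw [Fintype.sum_equiv (Units.mulRight (ZMod.unitOfCoprime n hn))
    (fun x => ψ (x * (ZMod.unitOfCoprime n hn))) ψ (fun x => rfl)]
  exact AddChar.sum_eq_zero_of_ne_one hψ

/-- The norm of the character of `mat3 ψ`. On `⟨a⟩` one has `|χ|² = 3 + z + z² + ⋯ + z⁶` with
`z = ψ x`, and the sum of each nontrivial power `z ^ n` over `x` is zero. -/
lemma norm3 (ψ : AddChar (ZMod 7) ℂ) (hψ : ψ ≠ 1) :
    ∑ p, (mat3 ψ p).trace * (starRingEnd ℂ) (mat3 ψ p).trace = 21 := by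
  rw [Fintype.sum_prod_type]
  have : ∀ x, ∑ y, (mat3 ψ (x, y)).trace * (starRingEnd ℂ) (mat3 ψ (x, y)).trace
      = 3 + ψ x + ψ x ^ 2 + ψ x ^ 4 + ψ x ^ 3 + ψ x ^ 5 + ψ x ^ 6 := by
    intro x
    simp only [mat3_trace]
    rw [Finset.sum_eq_single 0 (by intro b _ hb; simp [hb]) (by simp)]
    simp only [if_true, map_add, map_pow, conj7]
    have h := seven ψ x
    generalize ψ x = z at *
    grind
  simp only [this, Finset.sum_add_distrib, sum_pow ψ hψ 2 (by norm_num),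
    sum_pow ψ hψ 3 (by norm_num), sum_pow ψ hψ 4 (by norm_num), sum_pow ψ hψ 5 (by norm_num),
    sum_pow ψ hψ 6 (by norm_num), AddChar.sum_eq_zero_of_ne_one hψ]
  simp [ZMod.card]
  norm_num

lemma norm1 (ω : AddChar (ZMod 3) ℂ) :
    ∑ p, (mat1 ω p).trace * (starRingEnd ℂ) (mat1 ω p).trace = 21 := by
  have : ∀ p, (mat1 ω p).trace * (starRingEnd ℂ) (mat1 ω p).trace = 1 := by
    intro p
    rw [mat1_trace, Complex.mul_conj, Complex.normSq_eq_norm_sq, AddChar.norm_apply]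
    simp
  simp only [this]
  norm_num [ZMod.card]

/-! ### Irreducible representations and multiplicities -/

/-- A matrix representation in coordinates whose character has norm `1` comes from a simple object
of `FDRep ℂ G`. -/
lemma exists_simple {G : Type} [Group G] [Fintype G] (E : ZMod 7 × ZMod 3 ≃ G)
    (hE : ∀ p q, E p * E q = E (cmul p q)) {n : Type} [Fintype n] [DecidableEq n]
    (M : ZMod 7 × ZMod 3 → Matrix n n ℂ) (h0 : M 0 = 1)
    (hmul : ∀ p q, M (cmul p q) = M p * M q)
    (hnorm : ∑ p, (M p).trace * (starRingEnd ℂ) (M p).trace = 21) :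
    ∃ V : FDRep ℂ G, Simple V ∧ ∀ p, V.character (E p) = (M p).trace := by
  have hE0 : E 0 = 1 := by
    have h := hE 0 0
    rw [show cmul 0 0 = 0 by decide] at h
    exact mul_eq_left.1 h
  let ρ : Representation ℂ G (n → ℂ) :=
    { toFun := fun g => Matrix.toLin' (M (E.symm g))
      map_one' := by rw [← hE0, E.symm_apply_apply, h0, Matrix.toLin'_one]; rfl
      map_mul' := fun g h => by
        obtain ⟨p, rfl⟩ := E.surjective g
        obtain ⟨q, rfl⟩ := E.surjective h
        rw [hE]
        simp only [E.symm_apply_apply, hmul, Matrix.toLin'_mul]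
        rfl }
  have hchar (p) : (FDRep.of ρ).character (E p) = (M p).trace := by
    change LinearMap.trace ℂ (n → ℂ) (Matrix.toLin' (M (E.symm (E p)))) = _
    rw [E.symm_apply_apply, Matrix.trace_toLin'_eq]
  refine ⟨FDRep.of ρ, ?_, hchar⟩
  rw [FDRep.simple_iff_char_is_norm_one, ← Nat.card_congr E, ← E.sum_comp]
  simp only [← char_conj_eq_inv, hchar, hnorm]
  simp

/-- A simple representation contains exactly one of the `W k`, with multiplicity one. -/
lemma sum_mult_simple {G : Type} [Group G] [Fintype G]
    (κ : Type) [Fintype κ] (W : κ → FDRep ℂ G)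
    (hsimple : ∀ i, Simple (W i))
    (hdistinct : ∀ i j, Nonempty (W i ≅ W j) → i = j)
    (hcomplete : ∀ V : FDRep ℂ G, Simple V → ∃ i, Nonempty (W i ≅ V))
    (V : FDRep ℂ G) (hV : Simple V) : ∑ k, multIn V (W k) = 1 := by
  classical
  obtain ⟨i, ⟨e⟩⟩ := hcomplete V hV
  have : Invertible (Nat.card G : ℂ) := invertibleOfNonzero (NeZero.ne _)
  have h (k) : multIn V (W k) = if k = i then 1 else 0 := by
    have := FDRep.char_orthonormal V (W k)
    rw [multIn, one_div, ← Nat.card_eq_fintype_card]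
    simp only [char_conj_eq_inv]
    rw [this]
    congr 1
    apply propext
    constructor
    · rintro ⟨f⟩
      exact (hdistinct _ _ ⟨e ≪≫ f⟩).symm
    · rintro rfl
      exact ⟨e.symm⟩
  simp [h]

/-- the sum rule (7) fails for the Frobenius group `F₂₁`: for every nonabelian
group `G` of order 21 there are irreducible complex representations `i`, `j` of `G` with
`Σ_k N_{ij}^k ≠ Σ_k N_{ī j}^k`, where `k` ranges over (an indexing `κ` of) the isomorphism
classes of irreducible complex representations of `G` and `ī` is the dual of `i`. -/
theorem stmt_18 {G : Type} [Group G] [Fintype G]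
    (hcard : Fintype.card G = 21) (hnonab : ¬ ∀ a b : G, a * b = b * a)
    (κ : Type) [Fintype κ] (W : κ → FDRep ℂ G)
    (hsimple : ∀ i, Simple (W i))
    (hdistinct : ∀ i j, Nonempty (W i ≅ W j) → i = j)
    (hcomplete : ∀ V : FDRep ℂ G, Simple V → ∃ i, Nonempty (W i ≅ V)) :
    ∃ i j : κ,
      ∑ k : κ, multIn (W i ⊗ W j) (W k) ≠ ∑ k : κ, multIn ((W i)ᘁ ⊗ W j) (W k) := by
  classical
  obtain ⟨E, hE⟩ := exists_coords hcard hnonab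
  have hs := sum_mult_simple κ W hsimple hdistinct hcomplete
  set ψ : AddChar (ZMod 7) ℂ := ZMod.stdAddChar with hψdef
  have hψ : ψ ≠ 1 := by
    have h := ZMod.isPrimitive_stdAddChar 7 (show (1 : ZMod 7) ≠ 0 by decide)
    rwa [AddChar.mulShift_one] at h
  have hψ' : ψ⁻¹ ≠ 1 := inv_ne_one.2 hψ
  obtain ⟨V, hV, hVc⟩ := exists_simple E hE (mat3 ψ) (mat3_zero ψ) (mat3_mul ψ) (norm3 ψ hψ)
  obtain ⟨V', hV', hVc'⟩ :=
    exists_simple E hE (mat3 ψ⁻¹) (mat3_zero _) (mat3_mul _) (norm3 _ hψ')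
  choose L hL hLc using fun t : ZMod 3 =>
    exists_simple E hE (mat1 (ZMod.stdAddChar.mulShift t)) (mat1_zero _) (mat1_mul _) (norm1 _)
  obtain ⟨i, ⟨e⟩⟩ := hcomplete V hV
  have hinv (x) : ψ⁻¹ x = ψ x ^ 6 := by
    rw [← conj7, ← AddChar.map_neg_eq_conj, AddChar.inv_apply]
  -- off `⟨a⟩` all terms vanish; on `⟨a⟩` this is
  -- `(z + z² + z⁴)² = (z² + z⁴ + z) + 2 (z³ + z⁵ + z⁶)`, using `z⁷ = 1`
  have hsq (g : G) : (W i ⊗ W i).character g = V.character g + 2 * V'.character g := by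
    obtain ⟨p, rfl⟩ := E.surjective g
    rw [FDRep.char_tensor, Pi.mul_apply, FDRep.char_iso e, hVc, hVc', mat3_trace, mat3_trace]
    split_ifs
    · rw [hinv]
      have h := seven ψ p.1
      generalize ψ p.1 = z at *
      grind
    · simp
  -- `∑ t, L t` has character 3 on `⟨a⟩` and 0 elsewhere, by orthogonality on `ZMod 3`;
  -- on `⟨a⟩`, `(z + z² + z⁴) (z⁶ + z⁵ + z³) = 3 + (z + z² + z⁴) + (z³ + z⁵ + z⁶)`
  have hdual (g : G) : ((W i)ᘁ ⊗ W i).character g =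
      V.character g + V'.character g + ∑ t, (L t).character g := by
    have h1 : ((W i)ᘁ ⊗ W i).character g = (starRingEnd ℂ) (V.character g) * V.character g := by
      rw [FDRep.char_tensor, Pi.mul_apply, char_rightDual, ← char_conj_eq_inv, FDRep.char_iso e]
    rw [h1]
    obtain ⟨p, rfl⟩ := E.surjective g
    simp only [hVc, hVc', hLc, mat3_trace, mat1_trace, AddChar.mulShift_apply]
    rw [AddChar.sum_mulShift p.2 (ZMod.isPrimitive_stdAddChar 3)]
    split_ifs
    · simp only [map_add, map_pow, conj7, hinv, ZMod.card]
      have h := seven ψ p.1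
      generalize ψ p.1 = z at *
      push_cast
      grind
    · simp
  refine ⟨i, i, ?_⟩
  have r1 : ∑ k, multIn (W i ⊗ W i) (W k) = 3 := by
    have hk (k) : multIn (W i ⊗ W i) (W k) = multIn V (W k) + 2 * multIn V' (W k) := by
      simp only [multIn, hsq, add_mul, Finset.sum_add_distrib, mul_assoc, ← Finset.mul_sum]
      ring
    simp only [hk, Finset.sum_add_distrib, ← Finset.mul_sum, hs V hV, hs V' hV']
    norm_num
  have r2 : ∑ k, multIn ((W i)ᘁ ⊗ W i) (W k) = 5 := by
    have hk (k) : multIn ((W i)ᘁ ⊗ W i) (W k) =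
        multIn V (W k) + multIn V' (W k) + ∑ t, multIn (L t) (W k) := by
      simp only [multIn, hdual, add_mul, Finset.sum_add_distrib, mul_add, ← Finset.mul_sum,
        Finset.sum_mul]
      rw [Finset.sum_comm]
    simp only [hk, Finset.sum_add_distrib, hs V hV, hs V' hV']
    rw [Finset.sum_comm]
    simp only [fun t => hs (L t) (hL t)]
    simp [ZMod.card]
    norm_num
  rw [r1, r2]
  norm_num
end
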